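/- arXiv:2111.10238 — 2 statements merged into one kernel-verified Lean document; each statement's English description precedes it below -/
import Mathlib

section
/- No-gap second-order optimality condition: Assume that the map h ↦ F''(x̄)(h,h) is sequentially weak-* lower semicontinuous on X, that the non-degeneracy condition (NDC) holds (for all sequences h_k ⇀* 0 in X with ‖h_k‖_X = 1 and t_k ↓ 0 one has liminf_{k→∞} [ (1/t_k²)(G(x̄ + t_k h_k) − G(x̄)) + ⟨F'(x̄), h_k⟩/t_k + (1/2) F''(x̄)(h_k,h_k) ] > 0), and that either (i) h ↦ F''(x̄)(h,h) is sequentially weak-* upper semicontinuous or (ii) G is strongly twice epi-differentiable at x̄ for −F'(x̄). Then the condition F''(x̄)(h,h) + G''(x̄, −F'(x̄); h) > 0 for all h ∈ X \ {0} is equivalent to the existence of c > 0 and ε > 0 such that F(x) + G(x) ≥ F(x̄) + G(x̄) + (c/2)‖x − x̄‖²_X for all x ∈ B_ε(x̄). -/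
open Filter Topology

/-- The weak-* second subderivative `G''(x, w; h)` of `G : X → (−∞,∞]` on the dual
`X = Y*`, at `x` for `w ∈ Y`, in direction `h`. -/
noncomputable def weakStarSecondSubderiv {Y : Type*} [NormedAddCommGroup Y] [NormedSpace ℝ Y]
    (G : (Y →L[ℝ] ℝ) → EReal) (x : Y →L[ℝ] ℝ) (w : Y) (h : Y →L[ℝ] ℝ) : EReal :=
  sInf { L : EReal | ∃ (t : ℕ → ℝ) (hs : ℕ → (Y →L[ℝ] ℝ)),
    (∀ k, 0 < t k) ∧ Tendsto t atTop (𝓝 0) ∧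
    (∀ z : Y, Tendsto (fun k => hs k z) atTop (𝓝 (h z))) ∧
    L = liminf (fun k => (((2 / (t k) ^ 2 : ℝ)) : EReal) *
          (G (x + t k • hs k) - G x - (((t k * hs k w : ℝ)) : EReal))) atTop }

/-- `G` is strongly twice epi-differentiable at `x` for `w`. -/
def StronglyTwiceEpiDiff {Y : Type*} [NormedAddCommGroup Y] [NormedSpace ℝ Y]
    (G : (Y →L[ℝ] ℝ) → EReal) (x : Y →L[ℝ] ℝ) (w : Y) : Prop :=
  ∀ h : Y →L[ℝ] ℝ, ∀ t : ℕ → ℝ, (∀ k, 0 < t k) → Tendsto t atTop (𝓝 0) →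
    ∃ hs : ℕ → (Y →L[ℝ] ℝ), Tendsto hs atTop (𝓝 h) ∧
      Tendsto (fun k => (((2 / (t k) ^ 2 : ℝ)) : EReal) *
          (G (x + t k • hs k) - G x - (((t k * hs k w : ℝ)) : EReal))) atTop
        (𝓝 (weakStarSecondSubderiv G x w h))

theorem ng_alaoglu {Y : Type*} [NormedAddCommGroup Y] [NormedSpace ℝ Y]
    [TopologicalSpace.SeparableSpace Y] (hs : ℕ → (Y →L[ℝ] ℝ)) (hn : ∀ k, ‖hs k‖ = 1) :
    ∃ (h : Y →L[ℝ] ℝ) (φ : ℕ → ℕ), StrictMono φ ∧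
      ∀ z : Y, Tendsto (fun k => hs (φ k) z) atTop (𝓝 (h z)) := by
  have hc := WeakDual.isSeqCompact_closedBall ℝ Y (0 : StrongDual ℝ Y) 1
  obtain ⟨a, -, φ, hφ, hlim⟩ := hc (x := fun k => StrongDual.toWeakDual (hs k)) (by
    intro k
    simp only [Set.mem_preimage, Metric.mem_closedBall, dist_zero_right]
    exact (hn k).le)
  refine ⟨WeakDual.toStrongDual a, φ, hφ, fun z => ?_⟩
  exact ((WeakDual.eval_continuous z).tendsto a).comp hlim

theorem ng_bdd {Y : Type*} [NormedAddCommGroup Y] [NormedSpace ℝ Y] [CompleteSpace Y]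
    (hs : ℕ → (Y →L[ℝ] ℝ)) (h : Y →L[ℝ] ℝ)
    (hw : ∀ z : Y, Tendsto (fun k => hs k z) atTop (𝓝 (h z))) :
    ∃ C : ℝ, ∀ k, ‖hs k‖ ≤ C := by
  apply banach_steinhaus
  intro z
  obtain ⟨C, hC⟩ := (hw z).norm.bddAbove_range
  exact ⟨C, fun k => hC ⟨k, rfl⟩⟩

/-- the difference quotient is the coercion of a real one -/
theorem ng_quot (s a b d : ℝ) :
    ((s : ℝ) : EReal) * ((a : EReal) - (b : EReal) - (d : EReal)) = ((s * (a - b - d) : ℝ) : EReal) := by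
  push_cast; rfl

theorem ng_quot_top (s b d : ℝ) (hs : 0 < s) :
    ((s : ℝ) : EReal) * ((⊤ : EReal) - (b : EReal) - (d : EReal)) = ⊤ := by
  rw [EReal.top_sub_coe, EReal.top_sub_coe, EReal.coe_mul_top_of_pos hs]

/-- Key estimate for the necessity part. -/
theorem ng_key {Y : Type*} [NormedAddCommGroup Y] [NormedSpace ℝ Y] [CompleteSpace Y]
    (G : (Y →L[ℝ] ℝ) → EReal) (hGbot : ∀ x, G x ≠ ⊥)
    (F : (Y →L[ℝ] ℝ) → ℝ)
    (xbar : Y →L[ℝ] ℝ) (hxbar : G xbar ≠ ⊤)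
    (F' : Y) (F'' : (Y →L[ℝ] ℝ) →L[ℝ] (Y →L[ℝ] ℝ) →L[ℝ] ℝ)
    (hTaylor : ∀ (t : ℕ → ℝ) (hs : ℕ → (Y →L[ℝ] ℝ)) (h : Y →L[ℝ] ℝ),
      (∀ k, 0 < t k) → Tendsto t atTop (𝓝 0) →
      (∀ z : Y, Tendsto (fun k => hs k z) atTop (𝓝 (h z))) →
      (∀ k, G (xbar + t k • hs k) ≠ ⊤) →
      Tendsto (fun k => (F (xbar + t k • hs k) - F xbar - t k * hs k F'
          - (1 / 2) * (t k) ^ 2 * F'' (hs k) (hs k)) / (t k) ^ 2) atTop (𝓝 0))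
    (c ε : ℝ) (hc : 0 < c) (hε : 0 < ε)
    (hgrow : ∀ x : Y →L[ℝ] ℝ, ‖x - xbar‖ ≤ ε →
            ((F xbar : ℝ) : EReal) + G xbar + ((c / 2 * ‖x - xbar‖ ^ 2 : ℝ) : EReal)
              ≤ ((F x : ℝ) : EReal) + G x)
    (h : Y →L[ℝ] ℝ) (hne : h ≠ 0) :
    ∃ a : ℝ, 0 < a ∧ ∀ (t : ℕ → ℝ) (hs : ℕ → (Y →L[ℝ] ℝ)),
      (∀ k, 0 < t k) → Tendsto t atTop (𝓝 0) →
      (∀ z : Y, Tendsto (fun k => hs k z) atTop (𝓝 (h z))) →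
      limsup (fun k => ((F'' (hs k) (hs k) : ℝ) : EReal)) atTop ≤ ((F'' h h : ℝ) : EReal) →
      ∀ᶠ k in atTop, ((a - F'' h h : ℝ) : EReal) ≤ (((2 / (t k) ^ 2 : ℝ)) : EReal) *
          (G (xbar + t k • hs k) - G xbar - (((t k * hs k (-F') : ℝ)) : EReal)) := by
  obtain ⟨z, hz⟩ : ∃ z, h z ≠ 0 := by
    by_contra! H
    exact hne (ContinuousLinearMap.ext H)
  have hz0 : z ≠ 0 := by rintro rfl; simp at hz
  have hzn : 0 < ‖z‖ := norm_pos_iff.2 hz0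
  refine ⟨c * (h z / ‖z‖) ^ 2 / 4, by positivity, ?_⟩
  set a := c * (h z / ‖z‖) ^ 2 / 4 with ha_def
  have ha : 0 < a := by positivity
  intro t hs ht ht0 hw hsup
  by_contra hcon
  rw [not_eventually] at hcon
  have hF : ∀ᶠ k in atTop, F'' (hs k) (hs k) < F'' h h + a := by
    have : limsup (fun k => ((F'' (hs k) (hs k) : ℝ) : EReal)) atTop
        < ((F'' h h + a : ℝ) : EReal) :=
      hsup.trans_lt (by exact_mod_cast (by linarith : F'' h h < F'' h h + a))
    filter_upwards [eventually_lt_of_limsup_lt this] with k hk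
    exact_mod_cast hk
  obtain ⟨C, hC⟩ := ng_bdd hs h hw
  have hsmall : ∀ᶠ k in atTop, t k * C < ε := by
    have : Tendsto (fun k => t k * C) atTop (𝓝 0) := by simpa using ht0.mul_const C
    exact this.eventually_lt_const hε
  have hnorm : ∀ᶠ k in atTop, 3 * a < c * ‖hs k‖ ^ 2 := by
    have : Tendsto (fun k => c * (hs k z / ‖z‖) ^ 2) atTop (𝓝 (c * (h z / ‖z‖) ^ 2)) :=
      (((hw z).div_const _).pow 2).const_mul c
    have h2 := this.eventually_const_lt (show 3 * a < c * (h z / ‖z‖) ^ 2 by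
      rw [ha_def] at ha ⊢; linarith)
    filter_upwards [h2] with k hk
    refine hk.trans_le ?_
    have h3 : |hs k z / ‖z‖| ≤ ‖hs k‖ := by
      rw [abs_div, abs_of_pos hzn, div_le_iff₀ hzn]
      exact (hs k).le_opNorm z
    have h4 : (hs k z / ‖z‖) ^ 2 ≤ ‖hs k‖ ^ 2 := by
      rw [← sq_abs]; gcongr
    gcongr
  obtain ⟨φ, hφ, hφP⟩ := extraction_of_frequently_atTop
    (hcon.and_eventually (hF.and (hsmall.and hnorm)))
  obtain ⟨γ, hγ⟩ : ∃ γ : ℝ, G xbar = γ :=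
    ⟨(G xbar).toReal, (EReal.coe_toReal hxbar (hGbot _)).symm⟩
  have hdom : ∀ k, G (xbar + t (φ k) • hs (φ k)) ≠ ⊤ := by
    intro k htop
    apply (hφP k).1
    have := ht (φ k)
    rw [htop, hγ, ng_quot_top _ _ _ (by positivity)]
    exact le_top
  have hT := hTaylor (t ∘ φ) (hs ∘ φ) h (fun k => ht _) (ht0.comp hφ.tendsto_atTop)
    (fun z => (hw z).comp hφ.tendsto_atTop) hdom
  obtain ⟨k, hk⟩ := (hT.eventually_lt_const (show (0 : ℝ) < a / 2 by positivity)).exists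
  simp only [Function.comp] at hk
  obtain ⟨h1, h2, h3, h4⟩ := hφP k
  have hd := hdom k
  generalize φ k = n at *
  obtain ⟨γ', hγ'⟩ : ∃ γ' : ℝ, G (xbar + t n • hs n) = γ' :=
    ⟨_, (EReal.coe_toReal hd (hGbot _)).symm⟩
  have htn := ht n
  have hnx : ‖xbar + t n • hs n - xbar‖ = t n * ‖hs n‖ := by
    rw [add_sub_cancel_left, norm_smul, Real.norm_of_nonneg htn.le]
  have hg := hgrow (xbar + t n • hs n) (by
    rw [hnx]
    exact (mul_le_mul_of_nonneg_left (hC n) htn.le).trans h3.le)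
  rw [hnx, hγ, hγ'] at hg
  norm_cast at hg
  rw [hγ, hγ', ng_quot] at h1
  norm_cast at h1
  rw [not_le, map_neg] at h1
  have ht2 : 0 < t n ^ 2 := by positivity
  rw [div_lt_iff₀ ht2] at hk
  have h1' : 2 * (γ' - γ - t n * -(hs n F')) < (a - F'' h h) * t n ^ 2 := by
    rw [div_mul_eq_mul_div, div_lt_iff₀ ht2] at h1
    exact h1
  have h2' := mul_lt_mul_of_pos_right h2 ht2
  have h4' := mul_lt_mul_of_pos_right h4 ht2
  nlinarith

/-- Theorem 2.8, no-gap second-order optimality condition.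
Under the Taylor expansion of `F`, sequential weak-* lower semicontinuity of
`h ↦ F''(x̄)h²`, the non-degeneracy condition (NDC), and either (i) sequential weak-*
upper semicontinuity of `h ↦ F''(x̄)h²` or (ii) strong twice epi-differentiability of `G`
at `x̄` for `−F'(x̄)`, the positivity `F''(x̄)h² + G''(x̄, −F'(x̄); h) > 0` for all
`h ≠ 0` is equivalent to quadratic growth of `F + G` near `x̄` with some `c > 0`,
`ε > 0`. -/
theorem no_gap_second_order_condition
    {Y : Type*} [NormedAddCommGroup Y] [NormedSpace ℝ Y] [CompleteSpace Y]
    [TopologicalSpace.SeparableSpace Y]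
    (G : (Y →L[ℝ] ℝ) → EReal) (hGbot : ∀ x, G x ≠ ⊥)
    (F : (Y →L[ℝ] ℝ) → ℝ)
    (xbar : Y →L[ℝ] ℝ) (hxbar : G xbar ≠ ⊤)
    (F' : Y) (F'' : (Y →L[ℝ] ℝ) →L[ℝ] (Y →L[ℝ] ℝ) →L[ℝ] ℝ)
    (hTaylor : ∀ (t : ℕ → ℝ) (hs : ℕ → (Y →L[ℝ] ℝ)) (h : Y →L[ℝ] ℝ),
      (∀ k, 0 < t k) → Tendsto t atTop (𝓝 0) →
      (∀ z : Y, Tendsto (fun k => hs k z) atTop (𝓝 (h z))) →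
      (∀ k, G (xbar + t k • hs k) ≠ ⊤) →
      Tendsto (fun k => (F (xbar + t k • hs k) - F xbar - t k * hs k F'
          - (1 / 2) * (t k) ^ 2 * F'' (hs k) (hs k)) / (t k) ^ 2) atTop (𝓝 0))
    -- sequential weak-* lower semicontinuity of `h ↦ F''(x̄)h²`
    (hlsc : ∀ (h : Y →L[ℝ] ℝ) (hs : ℕ → (Y →L[ℝ] ℝ)),
      (∀ z : Y, Tendsto (fun k => hs k z) atTop (𝓝 (h z))) →
      ((F'' h h : ℝ) : EReal) ≤ liminf (fun k => ((F'' (hs k) (hs k) : ℝ) : EReal)) atTop)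
    -- non-degeneracy condition (NDC)
    (hNDC : ∀ (t : ℕ → ℝ) (hs : ℕ → (Y →L[ℝ] ℝ)),
      (∀ k, 0 < t k) → Tendsto t atTop (𝓝 0) →
      (∀ z : Y, Tendsto (fun k => hs k z) atTop (𝓝 (0 : ℝ))) →
      (∀ k, ‖hs k‖ = 1) →
      (0 : EReal) < liminf (fun k =>
        ((1 / (t k) ^ 2 : ℝ) : EReal) * (G (xbar + t k • hs k) - G xbar)
          + ((hs k F' / t k + (1 / 2) * F'' (hs k) (hs k) : ℝ) : EReal)) atTop)
    -- (i) weak-* upper semicontinuity of `F''` or (ii) strong twice epi-differentiability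
    (hAlt :
      (∀ (h : Y →L[ℝ] ℝ) (hs : ℕ → (Y →L[ℝ] ℝ)),
        (∀ z : Y, Tendsto (fun k => hs k z) atTop (𝓝 (h z))) →
        limsup (fun k => ((F'' (hs k) (hs k) : ℝ) : EReal)) atTop
          ≤ ((F'' h h : ℝ) : EReal))
      ∨ StronglyTwiceEpiDiff G xbar (-F')) :
    (∀ h : Y →L[ℝ] ℝ, h ≠ 0 →
        (0 : EReal) < ((F'' h h : ℝ) : EReal) + weakStarSecondSubderiv G xbar (-F') h)
      ↔ ∃ c : ℝ, 0 < c ∧ ∃ ε : ℝ, 0 < ε ∧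
          ∀ x : Y →L[ℝ] ℝ, ‖x - xbar‖ ≤ ε →
            ((F xbar : ℝ) : EReal) + G xbar + ((c / 2 * ‖x - xbar‖ ^ 2 : ℝ) : EReal)
              ≤ ((F x : ℝ) : EReal) + G x := by
  constructor
  · intro hpos
    by_contra hcon
    push Not at hcon
    obtain ⟨γ, hγ⟩ : ∃ γ : ℝ, G xbar = γ :=
      ⟨(G xbar).toReal, (EReal.coe_toReal hxbar (hGbot _)).symm⟩
    have hcp : ∀ n : ℕ, (0 : ℝ) < 1 / ((n : ℝ) + 1) := fun n => by positivity
    choose x hxε hx using fun n : ℕ => hcon _ (hcp n) _ (hcp n)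
    have hdom : ∀ n, G (x n) ≠ ⊤ := by
      intro n htop
      have := hx n
      rw [htop, EReal.coe_add_top] at this
      exact not_top_lt this
    obtain ⟨g, hg⟩ : ∃ g : ℕ → ℝ, ∀ n, G (x n) = g n :=
      ⟨fun n => (G (x n)).toReal, fun n => (EReal.coe_toReal (hdom n) (hGbot _)).symm⟩
    have hx' : ∀ n, F (x n) + g n
        < F xbar + γ + 1 / ((n : ℝ) + 1) / 2 * ‖x n - xbar‖ ^ 2 := by
      intro n
      have := hx n
      rw [hg, hγ] at this
      exact_mod_cast this
    have htpos : ∀ n, 0 < ‖x n - xbar‖ := by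
      intro n
      rw [norm_pos_iff, sub_ne_zero]
      intro he
      have h1 := hx' n
      have h2 := hg n
      rw [he, hγ] at h2
      have h3 : γ = g n := by exact_mod_cast h2
      rw [he, sub_self, norm_zero, h3] at h1
      norm_num at h1
    set t : ℕ → ℝ := fun n => ‖x n - xbar‖ with ht_def
    set hs : ℕ → (Y →L[ℝ] ℝ) := fun n => (t n)⁻¹ • (x n - xbar) with hs_def
    have hst : ∀ n, xbar + t n • hs n = x n := by
      intro n
      rw [hs_def]
      simp only
      rw [smul_smul, mul_inv_cancel₀ (htpos n).ne', one_smul, add_sub_cancel]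
    have hsn : ∀ n, ‖hs n‖ = 1 := by
      intro n
      rw [hs_def]
      simp only
      rw [norm_smul, norm_inv, Real.norm_of_nonneg (htpos n).le]
      exact inv_mul_cancel₀ (htpos n).ne'
    have hlim1 : Tendsto (fun n : ℕ => 1 / ((n : ℝ) + 1)) atTop (𝓝 0) :=
      tendsto_one_div_add_atTop_nhds_zero_nat
    have ht0 : Tendsto t atTop (𝓝 0) :=
      squeeze_zero (fun n => (htpos n).le) hxε hlim1
    obtain ⟨h, φ, hφ, hw⟩ := ng_alaoglu hs hsn
    have hφt := hφ.tendsto_atTop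
    have hT := hTaylor (t ∘ φ) (hs ∘ φ) h (fun k => htpos _) (ht0.comp hφt) hw
      (fun k => by simp only [Function.comp]; rw [hst]; exact hdom _)
    -- an upper bound for the real difference quotients, half scale
    have hub : ∀ δ : ℝ, 0 < δ → ∀ᶠ k in atTop,
        1 / t (φ k) ^ 2 * (g (φ k) - γ) + (hs (φ k) F' / t (φ k)
          + 1 / 2 * F'' (hs (φ k)) (hs (φ k))) < δ := by
      intro δ hδ
      have e1 := hT.eventually_const_lt (show -(δ / 2) < 0 by linarith)
      have e2 := (hlim1.comp hφt).eventually_lt_const hδ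
      filter_upwards [e1, e2] with k h1 h2
      simp only [Function.comp] at h1 h2
      rw [hst] at h1
      have h3 := hx' (φ k)
      have htk : 0 < t (φ k) := htpos _
      change F (x (φ k)) + g (φ k)
        < F xbar + γ + 1 / ((φ k : ℝ) + 1) / 2 * t (φ k) ^ 2 at h3
      have ht2 : 0 < t (φ k) ^ 2 := by positivity
      rw [lt_div_iff₀ ht2] at h1
      have key : 1 / t (φ k) ^ 2 * (g (φ k) - γ) + (hs (φ k) F' / t (φ k)
          + 1 / 2 * F'' (hs (φ k)) (hs (φ k)))
          = (g (φ k) - γ + t (φ k) * hs (φ k) F'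
            + 1 / 2 * t (φ k) ^ 2 * F'' (hs (φ k)) (hs (φ k))) / t (φ k) ^ 2 := by
        field_simp
        ring
      rw [key, div_lt_iff₀ ht2]
      have h2' := mul_lt_mul_of_pos_right h2 ht2
      linarith
    by_cases h0 : h = 0
    · have hN := hNDC (t ∘ φ) (hs ∘ φ) (fun k => htpos _) (ht0.comp hφt)
        (fun z => by simpa [h0] using hw z) (fun k => hsn _)
      obtain ⟨δ, hδ0, hδ⟩ := EReal.lt_iff_exists_real_btwn.1 hN
      have hδ0' : 0 < δ := by exact_mod_cast hδ0
      obtain ⟨k, hk1, hk2⟩ := ((eventually_lt_of_lt_liminf hδ).and (hub δ hδ0')).exists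
      simp only [Function.comp] at hk1
      rw [hst, hg, hγ] at hk1
      have hk3 : δ < 1 / t (φ k) ^ 2 * (g (φ k) - γ) + (hs (φ k) F' / t (φ k)
          + 1 / 2 * F'' (hs (φ k)) (hs (φ k))) := by exact_mod_cast hk1
      linarith
    · have hp := hpos h h0
      have hp' : ((-(F'' h h) : ℝ) : EReal) < weakStarSecondSubderiv G xbar (-F') h := by
        by_contra hle
        rw [not_lt] at hle
        have h1 : ((F'' h h : ℝ) : EReal) + weakStarSecondSubderiv G xbar (-F') h
            ≤ ((F'' h h : ℝ) : EReal) + ((-(F'' h h) : ℝ) : EReal) := by gcongr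
        rw [← EReal.coe_add, add_neg_cancel] at h1
        exact absurd hp (not_lt.2 h1)
      have hle : weakStarSecondSubderiv G xbar (-F') h ≤ _ :=
        sInf_le ⟨t ∘ φ, hs ∘ φ, fun k => htpos _, ht0.comp hφt, hw, rfl⟩
      obtain ⟨r, hr1, hr2⟩ := EReal.lt_iff_exists_real_btwn.1 (hp'.trans_le hle)
      have hr1' : -(F'' h h) < r := by exact_mod_cast hr1
      set δ := (r + F'' h h) / 2 with hδ
      have hδ0 : 0 < δ := by rw [hδ]; linarith
      have hl : ((F'' h h - δ : ℝ) : EReal)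
          < liminf (fun k => ((F'' (hs (φ k)) (hs (φ k)) : ℝ) : EReal)) atTop :=
        lt_of_lt_of_le (by exact_mod_cast (by linarith : F'' h h - δ < F'' h h))
          (hlsc h (hs ∘ φ) hw)
      obtain ⟨k, ⟨hk1, hk2⟩, hk3⟩ := (((eventually_lt_of_lt_liminf hr2).and
        (eventually_lt_of_lt_liminf hl)).and (hub (δ / 2) (by linarith))).exists
      simp only [Function.comp] at hk1
      rw [hst, hg, hγ, ng_quot] at hk1
      norm_cast at hk1 hk2
      rw [map_neg] at hk1
      have htk : 0 < t (φ k) := htpos _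
      have key : 2 / t (φ k) ^ 2 * (g (φ k) - γ - t (φ k) * -(hs (φ k) F'))
          = 2 * (1 / t (φ k) ^ 2 * (g (φ k) - γ) + hs (φ k) F' / t (φ k)) := by
        field_simp
        ring
      rw [key] at hk1
      linarith
  · rintro ⟨c, hc, ε, hε, hgrow⟩ h hne
    obtain ⟨a, ha, hkey⟩ := ng_key G hGbot F xbar hxbar F' F'' hTaylor c ε hc hε hgrow h hne
    have hmain : ((a - F'' h h : ℝ) : EReal) ≤ weakStarSecondSubderiv G xbar (-F') h := by
      rcases hAlt with husc | hepi
      · refine le_sInf ?_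
        rintro L ⟨t, hs, ht, ht0, hw, rfl⟩
        exact le_liminf_of_le (by isBoundedDefault) (hkey t hs ht ht0 hw (husc h hs hw))
      · obtain ⟨hs, hlim, hq⟩ := hepi h (fun n : ℕ => 1 / ((n : ℝ) + 1))
          (fun n => by positivity) tendsto_one_div_add_atTop_nhds_zero_nat
        have hFl : Tendsto (fun k => F'' (hs k) (hs k)) atTop (𝓝 (F'' h h)) := by
          have hcont : Continuous fun v : Y →L[ℝ] ℝ => F'' v v := by fun_prop
          exact (hcont.tendsto h).comp hlim
        have hFl' : Tendsto (fun k => ((F'' (hs k) (hs k) : ℝ) : EReal)) atTop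
            (𝓝 ((F'' h h : ℝ) : EReal)) := (continuous_coe_real_ereal.tendsto _).comp hFl
        refine ge_of_tendsto hq (hkey _ hs (fun n => by positivity)
          tendsto_one_div_add_atTop_nhds_zero_nat (fun z => ?_) hFl'.limsup_eq.le)
        have hcont : Continuous fun v : Y →L[ℝ] ℝ => v z := by fun_prop
        exact (hcont.tendsto h).comp hlim
    calc (0 : EReal) < ((a : ℝ) : EReal) := by exact_mod_cast ha
      _ = ((F'' h h : ℝ) : EReal) + ((a - F'' h h : ℝ) : EReal) := by
        rw [← EReal.coe_add]; congr 1; ring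
      _ ≤ _ := by gcongr
end

section
/- Let w ∈ C¹(ℝ) be such that {w = 0} = {0} and w'(0) ≠ 0, let z ∈ C_c(ℝ), and for t > 0 set Ω_t := { x ∈ ℝ : sign(w(x)) ≠ sign(w(x) + t z(x)) }. Then for every ψ ∈ C(ℝ), as t ↓ 0: (a) (1/t) ∫_{Ω_t} ψ dλ¹ → ψ(0)|z(0)| / |w'(0)|; (b) (1/t) ∫_{Ω_t} ψ·sign(z) dλ¹ → ψ(0) z(0) / |w'(0)|; (c) (1/t) ∫_{Ω_t} (|w|/t) dλ¹ → (1/2) z(0)² / |w'(0)|. -/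
open Filter Topology MeasureTheory

lemma aux_measurable_sign : Measurable Real.sign := by
  have h : Real.sign = fun r : ℝ => if r < 0 then (-1 : ℝ) else if 0 < r then 1 else 0 := by
    funext r; rfl
  rw [h]
  exact Measurable.ite measurableSet_Iio measurable_const
    (Measurable.ite measurableSet_Ioi measurable_const measurable_const)

lemma aux_sign_eq {p q : ℝ} (h : 0 < p * q) : Real.sign p = Real.sign q := by
  rcases pos_and_pos_or_neg_and_neg_of_mul_pos h with ⟨h1, h2⟩ | ⟨h1, h2⟩
  · rw [Real.sign_of_pos h1, Real.sign_of_pos h2]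
  · rw [Real.sign_of_neg h1, Real.sign_of_neg h2]

lemma aux_sign_ne {p q : ℝ} (h : p * q < 0) : Real.sign p ≠ Real.sign q := by
  rcases mul_neg_iff.1 h with ⟨h1, h2⟩ | ⟨h1, h2⟩
  · rw [Real.sign_of_pos h1, Real.sign_of_neg h2]; norm_num
  · rw [Real.sign_of_neg h1, Real.sign_of_pos h2]; norm_num

lemma aux_sign_abs (r : ℝ) : Real.sign r * |r| = r := by
  rcases lt_trichotomy r 0 with h | h | h
  · rw [Real.sign_of_neg h, abs_of_neg h]; ring
  · simp [h]
  · rw [Real.sign_of_pos h, abs_of_pos h]; ring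

lemma aux_sign_bound (r : ℝ) : |Real.sign r| ≤ 1 := by
  rcases Real.sign_apply_eq r with h | h | h <;> simp [h]

/-- A point with a sign change satisfies `|w| ≤ t |z|`. -/
lemma aux_omega_bound {p t q : ℝ} (ht : 0 < t)
    (h : Real.sign p ≠ Real.sign (p + t * q)) : |p| ≤ t * |q| := by
  by_contra! hlt
  apply h
  apply aux_sign_eq
  have h1 : |p * (t * q)| < p * p := by
    have hp : 0 < |p| := lt_of_le_of_lt (by positivity) hlt
    rw [abs_mul, abs_mul t, abs_of_pos ht, ← abs_mul_abs_self p]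
    exact mul_lt_mul_of_pos_left hlt hp
  have h2 := neg_abs_le (p * (t * q))
  nlinarith

lemma aux_uIoc {b y : ℝ} (hy0 : y ≠ 0) (hyb : y ≠ b) : y ∈ Set.uIoc 0 b ↔ y * (y - b) < 0 := by
  rw [Set.mem_uIoc, mul_neg_iff]
  constructor
  · rintro (⟨h1, h2⟩ | ⟨h1, h2⟩)
    · left; exact ⟨h1, sub_neg.2 (lt_of_le_of_ne h2 hyb)⟩
    · right; exact ⟨lt_of_le_of_ne h2 hy0, sub_pos.2 h1⟩
  · rintro (⟨h1, h2⟩ | ⟨h1, h2⟩)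
    · left; exact ⟨h1, by linarith⟩
    · right; exact ⟨by linarith, h1.le⟩

lemma aux_tendsto_scale (y : ℝ) : Tendsto (fun t : ℝ => t * y) (𝓝[>] 0) (𝓝 0) := by
  have h : Continuous (fun t : ℝ => t * y) := by fun_prop
  have := h.tendsto 0
  simp only [zero_mul] at this
  exact this.mono_left nhdsWithin_le_nhds

lemma aux_tendsto_w (w : ℝ → ℝ) (hw : ContDiff ℝ 1 w) (h0 : w 0 = 0) (y : ℝ) :
    Tendsto (fun t : ℝ => w (t * y) / t) (𝓝[>] 0) (𝓝 (deriv w 0 * y)) := by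
  have hd : DifferentiableAt ℝ w 0 := hw.differentiable one_ne_zero 0
  have hc : ContinuousAt (dslope w 0) 0 := continuousAt_dslope_same.2 hd
  have h1 : Tendsto (fun t : ℝ => dslope w 0 (t * y) * y) (𝓝[>] 0) (𝓝 (deriv w 0 * y)) := by
    have := (hc.tendsto.comp (aux_tendsto_scale y)).mul_const y
    rwa [dslope_same] at this
  refine h1.congr' ?_
  filter_upwards [self_mem_nhdsWithin] with t ht
  have ht' : (0 : ℝ) < t := ht
  have h2 := sub_smul_dslope w 0 (t * y)
  simp only [sub_zero, smul_eq_mul, h0] at h2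
  rw [← h2]
  field_simp

lemma aux_lower (w : ℝ → ℝ) (hw : ContDiff ℝ 1 w)
    (hzero : ∀ x : ℝ, w x = 0 ↔ x = 0) (hw' : deriv w 0 ≠ 0) (K : Set ℝ) (hK : IsCompact K) :
    ∃ C : ℝ, 0 ≤ C ∧ ∀ x ∈ K, |x| ≤ C * |w x| := by
  have h0 : w 0 = 0 := (hzero 0).2 rfl
  have hd : Differentiable ℝ w := hw.differentiable one_ne_zero
  have hc : Continuous (dslope w 0) := by
    rw [continuous_iff_continuousAt]
    intro x
    by_cases hx : x = 0
    · subst hx; exact continuousAt_dslope_same.2 (hd 0)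
    · exact (continuousAt_dslope_of_ne hx).2 (hd x).continuousAt
  have hmul : ∀ x, x * dslope w 0 x = w x := by
    intro x
    have h2 := sub_smul_dslope w 0 x
    simpa only [sub_zero, smul_eq_mul, h0] using h2
  have hne : ∀ x, dslope w 0 x ≠ 0 := by
    intro x hx
    by_cases hx0 : x = 0
    · subst hx0; rw [dslope_same] at hx; exact hw' hx
    · have := hmul x
      rw [hx, mul_zero] at this
      exact hx0 ((hzero x).1 this.symm)
  obtain ⟨C, hC⟩ := hK.exists_bound_of_continuousOn (hc.inv₀ hne).continuousOn
  refine ⟨|C|, abs_nonneg _, fun x hx => ?_⟩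
  have h1 : x = (dslope w 0 x)⁻¹ * w x := by
    rw [← hmul x]; field_simp [hne x]
  calc |x| = |(dslope w 0 x)⁻¹| * |w x| := by rw [← abs_mul, ← h1]
    _ ≤ |C| * |w x| := by
        exact mul_le_mul_of_nonneg_right ((hC x hx).trans (le_abs_self C)) (abs_nonneg _)

lemma aux_main
    (w : ℝ → ℝ) (hw : ContDiff ℝ 1 w)
    (hzero : ∀ x : ℝ, w x = 0 ↔ x = 0) (hw' : deriv w 0 ≠ 0)
    (z : ℝ → ℝ) (hz : Continuous z) (hzc : HasCompactSupport z)
    (Ωt : ℝ → Set ℝ)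
    (hΩt : ∀ t : ℝ, Ωt t = { x : ℝ | Real.sign (w x) ≠ Real.sign (w x + t * z x) })
    (F : ℝ → ℝ → ℝ) (hF : ∀ t, Measurable (F t)) (g : ℝ → ℝ) (K : ℝ)
    (hK : ∀ t, 0 < t → ∀ x ∈ tsupport z, |w x| ≤ t * |z x| → |F t x| ≤ K)
    (hlim : z 0 ≠ 0 → ∀ y, Tendsto (fun t => F t (t * y)) (𝓝[>] 0) (𝓝 (g y))) :
    Tendsto (fun t : ℝ => (1 / t) * ∫ x in Ωt t, F t x) (𝓝[>] 0)
      (𝓝 (∫ y in Set.uIoc 0 (-(z 0) / deriv w 0), g y)) := by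
  set a := deriv w 0 with ha
  set b := -(z 0) / a with hb
  have h0 : w 0 = 0 := (hzero 0).2 rfl
  have hwm : Measurable w := hw.continuous.measurable
  have hmeas : ∀ t, MeasurableSet (Ωt t) := by
    intro t
    rw [hΩt]
    exact (measurableSet_eq_fun (aux_measurable_sign.comp hwm)
      (aux_measurable_sign.comp (hwm.add (hz.measurable.const_mul t)))).compl
  have hsub : ∀ t, 0 < t → ∀ x ∈ Ωt t, x ∈ tsupport z ∧ |w x| ≤ t * |z x| := by
    intro t ht x hx
    rw [hΩt] at hx
    refine ⟨subset_tsupport z ?_, aux_omega_bound ht hx⟩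
    intro hzx
    apply hx
    simp [hzx]
  obtain ⟨C, hC0, hC⟩ := aux_lower w hw hzero hw' (tsupport z) hzc
  obtain ⟨M, hM⟩ := hz.bounded_above_of_compact_support hzc
  set R := C * M with hR
  have hconv : Tendsto (fun t : ℝ => ∫ y, (Ωt t).indicator (F t) (t * y)) (𝓝[>] 0)
      (𝓝 (∫ y, (Set.uIoc 0 b).indicator g y)) := by
    apply tendsto_integral_filter_of_dominated_convergence
      ((Set.Icc (-R) R).indicator (fun _ => |K|))
    · refine Eventually.of_forall fun t => ?_
      exact (((hF t).indicator (hmeas t)).comp (measurable_const_mul t)).aestronglyMeasurable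
    · filter_upwards [self_mem_nhdsWithin] with t ht
      have ht' : (0 : ℝ) < t := ht
      refine Eventually.of_forall fun y => ?_
      by_cases hy : t * y ∈ Ωt t
      · obtain ⟨h1, h2⟩ := hsub t ht' _ hy
        have h3 : |t * y| ≤ t * R := by
          calc |t * y| ≤ C * |w (t * y)| := hC _ h1
            _ ≤ C * (t * M) := by
                gcongr
                refine h2.trans ?_
                gcongr
                exact hM _
            _ = t * R := by rw [hR]; ring
        rw [abs_mul, abs_of_pos ht'] at h3
        have h4 : y ∈ Set.Icc (-R) R := abs_le.1 (le_of_mul_le_mul_left h3 ht')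
        rw [Set.indicator_of_mem hy, Set.indicator_of_mem h4]
        exact (hK t ht' _ h1 h2).trans (le_abs_self K)
      · rw [Set.indicator_of_notMem hy, norm_zero]
        exact Set.indicator_nonneg (fun _ _ => abs_nonneg K) y
    · rw [integrable_indicator_iff measurableSet_Icc]
      exact integrableOn_const (by simp)
    · have hae0 : ∀ᵐ y : ℝ, y ≠ 0 := by simp [ae_iff]
      have haeb : ∀ᵐ y : ℝ, y ≠ b := by simp [ae_iff]
      filter_upwards [hae0, haeb] with y hy0 hyb
      have hl1 := aux_tendsto_w w hw h0 y
      have hl2 : Tendsto (fun t : ℝ => z (t * y)) (𝓝[>] 0) (𝓝 (z 0)) :=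
        (hz.tendsto 0).comp (aux_tendsto_scale y)
      have hl3 := hl1.mul (hl1.add hl2)
      have hL : deriv w 0 * y * (deriv w 0 * y + z 0) = a ^ 2 * (y * (y - b)) := by
        rw [hb, ← ha]; field_simp; ring
      rw [hL] at hl3
      have ha2 : 0 < a ^ 2 := by positivity
      have key : ∀ t : ℝ, 0 < t → w (t * y) * (w (t * y) + t * z (t * y))
          = t ^ 2 * (w (t * y) / t * (w (t * y) / t + z (t * y))) := by
        intro t ht; field_simp
      by_cases hy : y ∈ Set.uIoc 0 b
      · have hz0 : z 0 ≠ 0 := by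
          intro h
          rw [hb, h] at hy
          simp at hy
        have hneg := (aux_uIoc hy0 hyb).1 hy
        rw [Set.indicator_of_mem hy]
        refine (hlim hz0 y).congr' ?_
        filter_upwards [self_mem_nhdsWithin,
          hl3.eventually (gt_mem_nhds (mul_neg_of_pos_of_neg ha2 hneg))] with t ht hlt
        have ht' : (0 : ℝ) < t := ht
        rw [Set.indicator_of_mem]
        rw [hΩt]
        apply aux_sign_ne
        rw [key t ht']
        exact mul_neg_of_pos_of_neg (by positivity) hlt
      · have hpos : 0 < y * (y - b) := by
          have h1 := mt (aux_uIoc hy0 hyb).2 hy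
          exact lt_of_le_of_ne (not_lt.1 h1) (mul_ne_zero hy0 (sub_ne_zero.2 hyb)).symm
        rw [Set.indicator_of_notMem hy]
        refine tendsto_const_nhds.congr' ?_
        filter_upwards [self_mem_nhdsWithin,
          hl3.eventually (lt_mem_nhds (mul_pos ha2 hpos))] with t ht hlt
        have ht' : (0 : ℝ) < t := ht
        rw [Set.indicator_of_notMem]
        rw [hΩt]
        intro hne
        apply hne
        apply aux_sign_eq
        rw [key t ht']
        positivity
  rw [integral_indicator measurableSet_uIoc] at hconv
  refine hconv.congr' ?_
  filter_upwards [self_mem_nhdsWithin] with t ht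
  have ht' : (0 : ℝ) < t := ht
  rw [Measure.integral_comp_mul_left, integral_indicator (hmeas t), smul_eq_mul,
    abs_of_pos (inv_pos.2 ht'), one_div]

lemma aux_int_const (b c : ℝ) : ∫ _ in Set.uIoc 0 b, c = c * |b| := by
  rw [setIntegral_const, smul_eq_mul, mul_comm, Measure.real, Real.volume_uIoc, sub_zero,
    ENNReal.toReal_ofReal (abs_nonneg b)]

lemma aux_int_abs (b a : ℝ) : ∫ y in Set.uIoc 0 b, |a * y| = |a| * b ^ 2 / 2 := by
  rcases le_total 0 b with h | h
  · rw [Set.uIoc_of_le h]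
    have h1 : ∫ y in Set.Ioc 0 b, |a * y| = ∫ y in Set.Ioc 0 b, |a| * y := by
      refine setIntegral_congr_fun measurableSet_Ioc fun y hy => ?_
      simp only [abs_mul, abs_of_pos hy.1]
    rw [h1, ← intervalIntegral.integral_of_le h, intervalIntegral.integral_const_mul, integral_id]
    ring
  · rw [Set.uIoc_of_ge h]
    have h1 : ∫ y in Set.Ioc b 0, |a * y| = ∫ y in Set.Ioc b 0, -|a| * y := by
      refine setIntegral_congr_fun measurableSet_Ioc fun y hy => ?_
      simp only [abs_mul, abs_of_nonpos hy.2]; ring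
    rw [h1, ← intervalIntegral.integral_of_le h, intervalIntegral.integral_const_mul, integral_id]
    ring

lemma aux_tendsto_sign {r : ℝ} (hr : r ≠ 0) : Tendsto Real.sign (𝓝 r) (𝓝 (Real.sign r)) := by
  refine tendsto_const_nhds.congr' ?_
  rcases lt_or_gt_of_ne hr with h | h
  · filter_upwards [gt_mem_nhds h] with x hx
    rw [Real.sign_of_neg h, Real.sign_of_neg hx]
  · filter_upwards [lt_mem_nhds h] with x hx
    rw [Real.sign_of_pos h, Real.sign_of_pos hx]

/-- Lemma 3.1, one-dimensional case.
Let `w ∈ C¹(ℝ)` with `{w = 0} = {0}` and `w'(0) ≠ 0`, let `z ∈ C_c(ℝ)`, and for `t > 0` set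
`Ω_t := { x | sign(w x) ≠ sign(w x + t z x) }`.  Then for every continuous `ψ : ℝ → ℝ`, as
`t ↓ 0`:
(a) `(1/t) ∫_{Ω_t} ψ dλ¹ → ψ(0)|z(0)|/|w'(0)|`;
(b) `(1/t) ∫_{Ω_t} ψ·sign(z) dλ¹ → ψ(0) z(0)/|w'(0)|`;
(c) `(1/t) ∫_{Ω_t} |w|/t dλ¹ → (1/2) z(0)²/|w'(0)|`. -/
theorem one_dimensional_sign_change_integral_limits
    (w : ℝ → ℝ) (hw : ContDiff ℝ 1 w)
    (hzero : ∀ x : ℝ, w x = 0 ↔ x = 0) (hw' : deriv w 0 ≠ 0)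
    (z : ℝ → ℝ) (hz : Continuous z) (hzc : HasCompactSupport z)
    (Ωt : ℝ → Set ℝ)
    (hΩt : ∀ t : ℝ, Ωt t = { x : ℝ | Real.sign (w x) ≠ Real.sign (w x + t * z x) })
    (ψ : ℝ → ℝ) (hψ : Continuous ψ) :
    Tendsto (fun t : ℝ => (1 / t) * ∫ x in Ωt t, ψ x ∂(volume : Measure ℝ))
        (𝓝[>] 0) (𝓝 (ψ 0 * |z 0| / |deriv w 0|)) ∧
    Tendsto (fun t : ℝ => (1 / t) * ∫ x in Ωt t, ψ x * Real.sign (z x) ∂(volume : Measure ℝ))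
        (𝓝[>] 0) (𝓝 (ψ 0 * z 0 / |deriv w 0|)) ∧
    Tendsto (fun t : ℝ => (1 / t) * ∫ x in Ωt t, |w x| / t ∂(volume : Measure ℝ))
        (𝓝[>] 0) (𝓝 ((1 / 2) * z 0 ^ 2 / |deriv w 0|)) := by
  
  have hψm : Measurable ψ := hψ.measurable
  have hwm : Measurable w := hw.continuous.measurable
  obtain ⟨K, hK⟩ := hzc.exists_bound_of_continuousOn hψ.continuousOn
  obtain ⟨M, hM⟩ := hz.bounded_above_of_compact_support hzc
  have hψl : ∀ y, Tendsto (fun t : ℝ => ψ (t * y)) (𝓝[>] 0) (𝓝 (ψ 0)) := fun y =>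
    (hψ.tendsto 0).comp (aux_tendsto_scale y)
  have hzl : ∀ y, Tendsto (fun t : ℝ => z (t * y)) (𝓝[>] 0) (𝓝 (z 0)) := fun y =>
    (hz.tendsto 0).comp (aux_tendsto_scale y)
  refine ⟨?_, ?_, ?_⟩
  · have h := aux_main w hw hzero hw' z hz hzc Ωt hΩt (fun _ x => ψ x) (fun _ => hψm)
      (fun _ => ψ 0) K (fun t _ x hx _ => hK x hx) (fun _ y => hψl y)
    rw [aux_int_const, abs_div, abs_neg, ← mul_div_assoc] at h
    exact h
  · have h := aux_main w hw hzero hw' z hz hzc Ωt hΩt (fun _ x => ψ x * Real.sign (z x))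
      (fun _ => hψm.mul (aux_measurable_sign.comp hz.measurable))
      (fun _ => ψ 0 * Real.sign (z 0)) K
      (fun t _ x hx _ => by
        rw [abs_mul]
        exact (mul_le_of_le_one_right (abs_nonneg _) (aux_sign_bound _)).trans (hK x hx))
      (fun hz0 y => (hψl y).mul ((aux_tendsto_sign hz0).comp (hzl y)))
    rw [aux_int_const, abs_div, abs_neg, ← mul_div_assoc, mul_assoc, aux_sign_abs] at h
    exact h
  · have h := aux_main w hw hzero hw' z hz hzc Ωt hΩt (fun t x => |w x| / t)
      (fun t => (continuous_abs.measurable.comp hwm).div_const t)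
      (fun y => |deriv w 0 * y|) M
      (fun t ht x _ hle => by
        rw [abs_div, abs_abs, abs_of_pos ht, div_le_iff₀ ht]
        have h1 : |z x| ≤ M := hM x
        nlinarith)
      (fun _ y => by
        refine (aux_tendsto_w w hw ((hzero 0).2 rfl) y).abs.congr' ?_
        filter_upwards [self_mem_nhdsWithin] with t ht
        have ht' : (0 : ℝ) < t := ht
        rw [abs_div, abs_of_pos ht'])
    rw [aux_int_abs] at h
    have he : |deriv w 0| * (-z 0 / deriv w 0) ^ 2 / 2 = (1 / 2) * z 0 ^ 2 / |deriv w 0| := by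
      rw [div_pow, ← sq_abs (deriv w 0)]
      have : |deriv w 0| ≠ 0 := abs_ne_zero.2 hw'
      field_simp
    rw [he] at h
    exact h
end
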